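/- Let G = (V, E) be a finite simple graph and V′ ⊆ V, and let p_{V′} : ℝ^V → ℝ^{V′} be the projection onto the coordinates indexed by V′. Then the pair (STAB(G), p_{V′}) has the PF-property if and only if any two vertices of V′ that are joined in G by a path all of whose inner vertices lie in V ∖ V′ are adjacent in G. -/

import Mathlib

open Set

/-- The stable set polytope of a graph: the convex hull of the characteristic vectors of its
independent (stable) sets. -/
def stabPolytope {V : Type*} (G : SimpleGraph V) : Set (V → ℝ) :=
  convexHull ℝ
    {x : V → ℝ | ∃ S : Set V, (∀ u ∈ S, ∀ w ∈ S, ¬ G.Adj u w) ∧ x = S.indicator 1}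

lemma stab_mem {V : Type*} (G : SimpleGraph V) (S : Set V)
    (h : ∀ u ∈ S, ∀ w ∈ S, ¬ G.Adj u w) : (S.indicator 1 : V → ℝ) ∈ stabPolytope G :=
  subset_convexHull ℝ _ ⟨S, h, rfl⟩

lemma stab_edge {V : Type*} (G : SimpleGraph V) {a b : V} (hab : G.Adj a b)
    {x : V → ℝ} (hx : x ∈ stabPolytope G) : x a + x b ≤ 1 := by
  have hc : Convex ℝ {x : V → ℝ | x a + x b ≤ 1} := by
    intro x hx y hy s t hs ht hst
    simp only [mem_ofPred_eq, Pi.add_apply, Pi.smul_apply, smul_eq_mul] at *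
    nlinarith
  refine convexHull_min ?_ hc hx
  rintro _ ⟨S, hS, rfl⟩
  by_cases ha : a ∈ S <;> by_cases hb : b ∈ S <;> simp [ha, hb]
  exact (hS a ha b hb hab).elim

/-- existence of an induced path, presented as a sequence -/
lemma exists_seq {V : Type*} (G : SimpleGraph V) (V' : Finset V) (u w : V)
    (hp : ∃ p : G.Walk u w, p.IsPath ∧ ∀ v ∈ p.support, v ≠ u → v ≠ w → v ∉ V') :
    ∃ (k : ℕ) (f : ℕ → V), f 0 = u ∧ f k = w ∧
      (∀ i < k, G.Adj (f i) (f (i + 1))) ∧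
      (∀ i ≤ k, f i ∈ V' → f i = u ∨ f i = w) ∧
      (∀ i ≤ k, ∀ j ≤ k, f i = f j → i = j) ∧
      (∀ i ≤ k, ∀ j ≤ k, G.Adj (f i) (f j) → j ≤ i + 1) := by
  classical
  obtain ⟨p, -, hp⟩ := hp
  let T : Set V := {z | z = u ∨ z = w ∨ z ∉ V'}
  have hpT : ∀ v ∈ p.support, v ∈ T := by
    intro v hv
    have := hp v hv
    simp only [T, mem_ofPred_eq]
    tauto
  let H : SimpleGraph V :=
    { Adj := fun a b => G.Adj a b ∧ a ∈ T ∧ b ∈ T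
      symm := ⟨fun a b h => ⟨h.1.symm, h.2.2, h.2.1⟩⟩
      loopless := ⟨fun a h => G.loopless.irrefl a h.1⟩ }
  have hedge : ∀ e ∈ p.edges, e ∈ H.edgeSet := by
    intro e he
    induction e using Sym2.ind with
    | _ a b =>
      exact ⟨p.adj_of_mem_edges he, hpT _ (p.fst_mem_support_of_mem_edges he),
        hpT _ (p.snd_mem_support_of_mem_edges he)⟩
  have hr : H.Reachable u w := ⟨p.transfer H hedge⟩
  obtain ⟨q, hq⟩ := hr.exists_walk_length_eq_dist
  have hmin : ∀ q' : H.Walk u w, q.length ≤ q'.length := fun q' => hq ▸ SimpleGraph.dist_le q'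
  have hT : ∀ i ≤ q.length, q.getVert i ∈ T := by
    intro i hi
    rcases hi.lt_or_eq with h | h
    · exact (q.adj_getVert_succ h).2.1
    · subst h
      simp [T]
  refine ⟨q.length, q.getVert, q.getVert_zero, q.getVert_length,
    fun i hi => (q.adj_getVert_succ hi).1, ?_, ?_, ?_⟩
  · intro i hi h
    have := hT i hi
    simp only [T, mem_ofPred_eq] at this
    tauto
  · have key : ∀ i ≤ q.length, ∀ j ≤ q.length, q.getVert i = q.getVert j → j ≤ i := by
      intro i hi j hj h
      have := hmin (((q.take i).copy rfl h).append (q.drop j))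
      simp [SimpleGraph.Walk.length_append] at this
      omega
    intro i hi j hj h
    exact le_antisymm (key j hj i hi h.symm) (key i hi j hj h)
  · intro i hi j hj h
    have h' : H.Adj (q.getVert i) (q.getVert j) := ⟨h, hT i hi, hT j hj⟩
    have := hmin (((q.take i).concat h').append (q.drop j))
    simp [SimpleGraph.Walk.length_append, SimpleGraph.Walk.length_concat] at this
    omega

lemma pf_forward {V : Type*} [Fintype V] [DecidableEq V]
    (G : SimpleGraph V) (V' : Finset V)
    (hF : ∀ F : Set (V → ℝ), IsExposed ℝ (stabPolytope G) F →
        IsExposed ℝ ((fun z (u : {v // v ∈ V'}) => z ↑u) '' stabPolytope G)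
          ((fun z (u : {v // v ∈ V'}) => z ↑u) '' F))
    (u : V) (hu : u ∈ V') (w : V) (hw : w ∈ V') (huw : u ≠ w)
    (hp : ∃ p : G.Walk u w, p.IsPath ∧ ∀ v ∈ p.support, v ≠ u → v ≠ w → v ∉ V') :
    G.Adj u w := by
  by_contra hnadj
  obtain ⟨k, f, f0, fk, fadj, fV, finj, find⟩ := exists_seq G V' u w hp
  let l : StrongDual ℝ (V → ℝ) := ∑ i ∈ Finset.range k,
    (ContinuousLinearMap.proj (R := ℝ) (φ := fun _ : V => ℝ) (f i)
      + ContinuousLinearMap.proj (R := ℝ) (φ := fun _ : V => ℝ) (f (i + 1)))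
  have hl : ∀ x, l x = ∑ i ∈ Finset.range k, (x (f i) + x (f (i+1))) := by
    intro x
    simp [l]
  let E : Set V := {z | ∃ i ≤ k, Even i ∧ z = f i}
  let O : Set V := {z | ∃ i ≤ k, ¬ Even i ∧ z = f i}
  have hE : ∀ a ∈ E, ∀ b ∈ E, ¬ G.Adj a b := by
    rintro _ ⟨i, hi, ei, rfl⟩ _ ⟨j, hj, ej, rfl⟩ h
    have h1 := find i hi j hj h
    have h2 := find j hj i hi h.symm
    have : i = j := by grind
    subst this
    exact G.loopless.irrefl _ h
  have hO : ∀ a ∈ O, ∀ b ∈ O, ¬ G.Adj a b := by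
    rintro _ ⟨i, hi, ei, rfl⟩ _ ⟨j, hj, ej, rfl⟩ h
    have h1 := find i hi j hj h
    have h2 := find j hj i hi h.symm
    have : i = j := by grind
    subst this
    exact G.loopless.irrefl _ h
  have mE : ∀ i ≤ k, f i ∈ E ↔ Even i := by
    intro i hi
    constructor
    · rintro ⟨j, hj, ej, h⟩
      rwa [finj i hi j hj h]
    · intro h
      exact ⟨i, hi, h, rfl⟩
  have mO : ∀ i ≤ k, f i ∈ O ↔ ¬ Even i := by
    intro i hi
    constructor
    · rintro ⟨j, hj, ej, h⟩
      rwa [finj i hi j hj h]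
    · intro h
      exact ⟨i, hi, h, rfl⟩
  have lE : l (E.indicator 1) = k := by
    rw [hl, Finset.sum_congr rfl (g := fun _ => (1:ℝ))]
    · simp
    · intro i hi
      rw [Finset.mem_range] at hi
      by_cases h : Even i <;>
        simp [Set.indicator_apply, mE i hi.le, mE (i+1) hi, h, Nat.even_add_one]
  have lO : l (O.indicator 1) = k := by
    rw [hl, Finset.sum_congr rfl (g := fun _ => (1:ℝ))]
    · simp
    · intro i hi
      rw [Finset.mem_range] at hi
      by_cases h : Even i <;>
        simp [Set.indicator_apply, mO i hi.le, mO (i+1) hi, h, Nat.even_add_one]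
  have lle : ∀ x ∈ stabPolytope G, l x ≤ k := by
    intro x hx
    rw [hl]
    calc _ ≤ ∑ i ∈ Finset.range k, (1:ℝ) := by
          apply Finset.sum_le_sum
          intro i hi
          exact stab_edge G (fadj i (Finset.mem_range.1 hi)) hx
      _ = k := by simp
  let F : Set (V → ℝ) := {x ∈ stabPolytope G | ∀ y ∈ stabPolytope G, l y ≤ l x}
  have hFE : E.indicator 1 ∈ F := ⟨stab_mem G E hE, fun y hy => lE ▸ lle y hy⟩
  have hFO : O.indicator 1 ∈ F := ⟨stab_mem G O hO, fun y hy => lO ▸ lle y hy⟩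
  have hFx : ∀ x ∈ F, x w = if Even k then x u else 1 - x u := by
    intro x hx
    have hk : l x = k := le_antisymm (lle x hx.1) (lE ▸ hx.2 _ hFE.1)
    have heq : ∀ i < k, x (f i) + x (f (i+1)) = 1 := by
      have h1 : ∑ i ∈ Finset.range k, (x (f i) + x (f (i+1))) = ∑ i ∈ Finset.range k, (1:ℝ) := by
        rw [← hl, hk]; simp
      have := (Finset.sum_eq_sum_iff_of_le (fun i hi =>
        stab_edge G (fadj i (Finset.mem_range.1 hi)) hx.1)).1 h1
      intro i hi
      exact this i (Finset.mem_range.2 hi)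
    have : ∀ i ≤ k, x (f i) = if Even i then x u else 1 - x u := by
      intro i
      induction i with
      | zero => intro _; simp [f0]
      | succ i ih =>
        intro hi
        have h1 := ih (by omega)
        have h2 := heq i (by omega)
        by_cases h : Even i <;> simp [h, Nat.even_add_one] at h1 ⊢ <;> linarith
    have h := this k le_rfl
    rwa [fk] at h
  let p : (V → ℝ) → ({v // v ∈ V'} → ℝ) := fun z u => z ↑u
  have hexp := hF F (fun _ => ⟨l, rfl⟩) ⟨_, ⟨_, hFE, rfl⟩⟩
  obtain ⟨m, hm⟩ := hexp
  change p '' F = {x ∈ p '' stabPolytope G | ∀ y ∈ p '' stabPolytope G, m y ≤ m x} at hm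
  have mEm : p (E.indicator 1) ∈ p '' F := ⟨_, hFE, rfl⟩
  have mOm : p (O.indicator 1) ∈ p '' F := ⟨_, hFO, rfl⟩
  rw [hm] at mEm mOm
  have hsum : ∀ x y : V → ℝ, x ∈ stabPolytope G → y ∈ stabPolytope G →
      p (E.indicator 1) + p (O.indicator 1) = p x + p y → ∃ z ∈ F, p z = p x := by
    intro x y hx hy h
    have h1 := mEm.2 (p x) ⟨x, hx, rfl⟩
    have h2 := mEm.2 (p y) ⟨y, hy, rfl⟩
    have h3 := mEm.2 _ mOm.1
    have h4 := mOm.2 _ mEm.1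
    have h5 := congrArg m h
    rw [map_add, map_add] at h5
    have : p x ∈ p '' F := by
      rw [hm]
      refine ⟨⟨x, hx, rfl⟩, fun y' hy' => ?_⟩
      have h6 := mEm.2 y' hy'
      linarith
    exact this
  have hsumEO : ∀ v ∈ V', (E.indicator 1 v : ℝ) + O.indicator 1 v
      = if v = u ∨ v = w then 1 else 0 := by
    intro v hv
    by_cases h : ∃ i ≤ k, v = f i
    · obtain ⟨i, hi, rfl⟩ := h
      rw [if_pos (fV i hi hv)]
      by_cases h : Even i <;> simp [Set.indicator_apply, mE i hi, mO i hi, h]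
    · have h1 : v ∉ E := fun ⟨i, hi, _, e⟩ => h ⟨i, hi, e⟩
      have h2 : v ∉ O := fun ⟨i, hi, _, e⟩ => h ⟨i, hi, e⟩
      have h3 : ¬ (v = u ∨ v = w) := by
        rintro (e | e)
        · exact h ⟨0, by omega, by rw [e, f0]⟩
        · exact h ⟨k, le_rfl, by rw [e, fk]⟩
      simp [h1, h2, h3]
  have s0 : ((∅ : Set V).indicator 1 : V → ℝ) ∈ stabPolytope G := stab_mem G _ (by simp)
  have su : (({u} : Set V).indicator 1 : V → ℝ) ∈ stabPolytope G := stab_mem G _ (by simp)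
  have sw : (({w} : Set V).indicator 1 : V → ℝ) ∈ stabPolytope G := stab_mem G _ (by simp)
  have suw : (({u, w} : Set V).indicator 1 : V → ℝ) ∈ stabPolytope G :=
    stab_mem G _ (by
      have this : ¬ G.Adj w u := fun h => hnadj h.symm
      simp [hnadj, this])
  by_cases hk : Even k
  · obtain ⟨z, hz, hpz⟩ := hsum _ _ su sw (by
      funext v
      refine (hsumEO v v.2).trans ?_
      by_cases h1 : (v : V) = u
      · simp [p, h1, huw, Set.indicator_apply]
      · by_cases h2 : (v : V) = w <;> simp [p, h1, h2, huw.symm, Set.indicator_apply])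
    have h1 : z u = _ := congrFun hpz ⟨u, hu⟩
    have h2 : z w = _ := congrFun hpz ⟨w, hw⟩
    have h3 := hFx z hz
    simp [p, hk, huw.symm, h1, h2] at h3
  · obtain ⟨z, hz, hpz⟩ := hsum _ _ s0 suw (by
      funext v
      refine (hsumEO v v.2).trans ?_
      simp [p, Set.indicator_apply])
    have h1 : z u = _ := congrFun hpz ⟨u, hu⟩
    have h2 : z w = _ := congrFun hpz ⟨w, hw⟩
    have h3 := hFx z hz
    simp [p, hk, h1, h2] at h3

/-- vertices reachable from `v` through the complement of `V'` -/
def reachOut {V : Type*} (G : SimpleGraph V) (V' : Finset V) (v : V) : Set V :=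
  {y | ∃ p : G.Walk v y, ∀ z ∈ p.support, z ≠ v → z ∉ V'}

lemma swap_stable {V : Type*} [DecidableEq V] (G : SimpleGraph V) (V' : Finset V)
    (H : ∀ u ∈ V', ∀ w ∈ V', u ≠ w →
        (∃ p : G.Walk u w, p.IsPath ∧ ∀ v ∈ p.support, v ≠ u → v ≠ w → v ∉ V') → G.Adj u w)
    (v : V) (hv : v ∈ V') (X Y : Set V)
    (hX : ∀ u ∈ X, ∀ w ∈ X, ¬ G.Adj u w) (hY : ∀ u ∈ Y, ∀ w ∈ Y, ¬ G.Adj u w)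
    (hXv : ∀ x ∈ X, x ∈ V' → ¬ G.Adj v x) :
    ∀ a ∈ X \ reachOut G V' v ∪ Y ∩ reachOut G V' v,
    ∀ b ∈ X \ reachOut G V' v ∪ Y ∩ reachOut G V' v, ¬ G.Adj a b := by
  have hvW : v ∈ reachOut G V' v := ⟨.nil, by simp⟩
  have main : ∀ x ∈ X \ reachOut G V' v, ∀ y ∈ Y ∩ reachOut G V' v, ¬ G.Adj y x := by
    rintro x ⟨hx, hxW⟩ y ⟨hy, p, hp⟩ h
    have hxv : v ≠ x := by rintro rfl; exact hxW hvW
    by_cases hxV : x ∈ V'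
    · refine hXv x hx hxV (H v hv x hxV hxv ⟨(p.concat h).bypass,
        SimpleGraph.Walk.bypass_isPath _, ?_⟩)
      intro z hz hzv hzx
      have := SimpleGraph.Walk.support_bypass_subset_support _ hz
      rw [SimpleGraph.Walk.support_concat] at this
      simp [hzx] at this
      exact hp z this hzv
    · refine hxW ⟨p.concat h, ?_⟩
      intro z hz hzv
      rw [SimpleGraph.Walk.support_concat] at hz
      simp at hz
      rcases hz with hz | rfl
      · exact hp z hz hzv
      · exact hxV
  rintro a (ha | ha) b (hb | hb) h
  · exact hX a ha.1 b hb.1 h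
  · exact main a ha b hb h.symm
  · exact main b hb a ha h
  · exact hY a ha.1 b hb.1 h

lemma swap_sum {V : Type*} (l : (V → ℝ) →+ ℝ) (X Y W : Set V) :
    l ((X \ W ∪ Y ∩ W).indicator 1) + l ((Y \ W ∪ X ∩ W).indicator 1)
      = l (X.indicator 1) + l (Y.indicator 1) := by
  classical
  rw [← map_add, ← map_add]
  congr 1
  funext v
  by_cases h1 : v ∈ X <;> by_cases h2 : v ∈ Y <;> by_cases h3 : v ∈ W <;>
    simp [Set.indicator_apply, h1, h2, h3]

/-- The optimal value of an extension of a stable set of `V'` is affine. -/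
lemma exists_affine {V : Type*} [Fintype V] [DecidableEq V]
    (G : SimpleGraph V) (V' : Finset V)
    (H : ∀ u ∈ V', ∀ w ∈ V', u ≠ w →
        (∃ p : G.Walk u w, p.IsPath ∧ ∀ v ∈ p.support, v ≠ u → v ≠ w → v ∉ V') → G.Adj u w)
    (l : (V → ℝ) →+ ℝ) :
    ∃ (c : ℝ) (d : V → ℝ), ∀ T : Finset V, T ⊆ V' → (∀ a ∈ T, ∀ b ∈ T, ¬ G.Adj a b) →
      ∃ A : Set V, (∀ a ∈ A, ∀ b ∈ A, ¬ G.Adj a b) ∧ (∀ v ∈ V', v ∈ A ↔ v ∈ T) ∧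
        l (A.indicator 1) = c + ∑ v ∈ T, d v ∧
        ∀ B : Set V, (∀ a ∈ B, ∀ b ∈ B, ¬ G.Adj a b) → (∀ v ∈ V', v ∈ B ↔ v ∈ T) →
          l (B.indicator 1) ≤ c + ∑ v ∈ T, d v := by
  let Q : Finset V → Set (Set V) := fun T =>
    {A | (∀ a ∈ A, ∀ b ∈ A, ¬ G.Adj a b) ∧ (∀ v ∈ V', v ∈ A ↔ v ∈ T)}
  have hQ : ∀ T : Finset V, ∃ A : Set V, T ⊆ V' → (∀ a ∈ T, ∀ b ∈ T, ¬ G.Adj a b) →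
      A ∈ Q T ∧ ∀ B ∈ Q T, l (B.indicator 1) ≤ l (A.indicator 1) := by
    intro T
    by_cases hT : T ⊆ V' ∧ (∀ a ∈ T, ∀ b ∈ T, ¬ G.Adj a b)
    · obtain ⟨A, hA, hA'⟩ := Set.exists_max_image (Q T) (fun B => l (B.indicator 1))
        (Set.toFinite _) ⟨(T : Set V), by simpa using hT.2, by simp⟩
      exact ⟨A, fun _ _ => ⟨hA, hA'⟩⟩
    · exact ⟨∅, fun h1 h2 => (hT ⟨h1, h2⟩).elim⟩
  choose A hA using hQ
  let φ : Finset V → ℝ := fun T => l ((A T).indicator 1)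
  have hφ : ∀ T : Finset V, T ⊆ V' → (∀ a ∈ T, ∀ b ∈ T, ¬ G.Adj a b) →
      φ T = φ ∅ + ∑ v ∈ T, (φ {v} - φ ∅) := by
    intro T
    induction T using Finset.induction_on with
    | empty => intros; simp
    | insert v S hvS ih =>
      intro hsub hst
      have hv : v ∈ V' := hsub (Finset.mem_insert_self _ _)
      have hSsub : S ⊆ V' := fun x hx => hsub (Finset.mem_insert_of_mem hx)
      have hSst : ∀ a ∈ S, ∀ b ∈ S, ¬ G.Adj a b := fun a ha b hb =>
        hst a (Finset.mem_insert_of_mem ha) b (Finset.mem_insert_of_mem hb)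
      have ih' := ih hSsub hSst
      rw [Finset.sum_insert hvS]
      have h0 := hA ∅ (by simp) (by simp)
      have h1 := hA {v} (by simpa using hv) (by simp)
      have hS := hA S hSsub hSst
      have hi := hA _ hsub hst
      have hvn : ∀ x ∈ insert v S, ¬ G.Adj v x := fun x hx =>
        hst v (Finset.mem_insert_self _ _) x hx
      set W := reachOut G V' v with hW
      have hvW : v ∈ W := ⟨.nil, by simp⟩
      have hWV : ∀ x ∈ V', x ∈ W → x = v := by
        rintro x hx ⟨p, hp⟩
        by_contra hne
        exact hp x p.end_mem_support hne hx
      have n0 : ∀ x ∈ A ∅, x ∈ V' → ¬ G.Adj v x := fun x hx hxV => by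
        have := (h0.1.2 x hxV).1 hx
        simp at this
      have n1 : ∀ x ∈ A {v}, x ∈ V' → ¬ G.Adj v x := fun x hx hxV => by
        have := (h1.1.2 x hxV).1 hx
        simp at this
        simp [this]
      have nS : ∀ x ∈ A S, x ∈ V' → ¬ G.Adj v x := fun x hx hxV =>
        hvn x (Finset.mem_insert_of_mem ((hS.1.2 x hxV).1 hx))
      have ni : ∀ x ∈ A (insert v S), x ∈ V' → ¬ G.Adj v x := fun x hx hxV =>
        hvn x ((hi.1.2 x hxV).1 hx)
      have e1 := swap_sum l (A (insert v S)) (A ∅) W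
      have e2 := swap_sum l (A S) (A {v}) W
      have i1 := hS.2 (A (insert v S) \ W ∪ A ∅ ∩ W)
        ⟨swap_stable G V' H v hv _ _ hi.1.1 h0.1.1 ni, fun x hx => by
          have a1 := hi.1.2 x hx
          have a2 := h0.1.2 x hx
          have a3 := hWV x hx
          simp only [Set.mem_union, Set.mem_sdiff, Set.mem_inter_iff, a1, a2, Finset.mem_insert]
          grind⟩
      have i2 := h1.2 (A ∅ \ W ∪ A (insert v S) ∩ W)
        ⟨swap_stable G V' H v hv _ _ h0.1.1 hi.1.1 n0, fun x hx => by
          have a1 := hi.1.2 x hx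
          have a2 := h0.1.2 x hx
          have a3 := hWV x hx
          simp only [Set.mem_union, Set.mem_sdiff, Set.mem_inter_iff, a1, a2, Finset.mem_insert]
          grind⟩
      have i3 := hi.2 (A S \ W ∪ A {v} ∩ W)
        ⟨swap_stable G V' H v hv _ _ hS.1.1 h1.1.1 nS, fun x hx => by
          have a1 := hS.1.2 x hx
          have a2 := h1.1.2 x hx
          have a3 := hWV x hx
          simp only [Set.mem_union, Set.mem_sdiff, Set.mem_inter_iff, a1, a2, Finset.mem_insert]
          grind⟩
      have i4 := h0.2 (A {v} \ W ∪ A S ∩ W)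
        ⟨swap_stable G V' H v hv _ _ h1.1.1 hS.1.1 n1, fun x hx => by
          have a1 := hS.1.2 x hx
          have a2 := h1.1.2 x hx
          have a3 := hWV x hx
          simp only [Set.mem_union, Set.mem_sdiff, Set.mem_inter_iff, a1, a2]
          grind⟩
      simp only [φ] at ih' ⊢
      linarith
  refine ⟨φ ∅, fun v => φ {v} - φ ∅, fun T hT hst => ⟨A T, (hA T hT hst).1.1, (hA T hT hst).1.2,
    hφ T hT hst, fun B hB hB' => ?_⟩⟩
  rw [← hφ T hT hst]
  exact (hA T hT hst).2 B ⟨hB, hB'⟩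

lemma pf_backward {V : Type*} [Fintype V] [DecidableEq V]
    (G : SimpleGraph V) (V' : Finset V)
    (H : ∀ u ∈ V', ∀ w ∈ V', u ≠ w →
        (∃ p : G.Walk u w, p.IsPath ∧ ∀ v ∈ p.support, v ≠ u → v ≠ w → v ∉ V') → G.Adj u w)
    (F : Set (V → ℝ)) (hF : IsExposed ℝ (stabPolytope G) F) :
    IsExposed ℝ ((fun z (u : {v // v ∈ V'}) => z ↑u) '' stabPolytope G)
          ((fun z (u : {v // v ∈ V'}) => z ↑u) '' F) := by
  classical
  intro hne
  obtain ⟨l, rfl⟩ := hF hne.of_image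
  obtain ⟨c, d, hcd⟩ := exists_affine G V' H (l : (V → ℝ) →+ ℝ)
  simp only [AddMonoidHom.coe_coe] at hcd
  let p : (V → ℝ) → ({v // v ∈ V'} → ℝ) := fun z u => z ↑u
  let m : StrongDual ℝ ({v // v ∈ V'} → ℝ) := ∑ u : {v // v ∈ V'},
    d u • ContinuousLinearMap.proj (R := ℝ) (φ := fun _ : {v // v ∈ V'} => ℝ) u
  have hm : ∀ x : V → ℝ, m (p x) = ∑ v ∈ V', d v * x v := by
    intro x
    rw [← Finset.sum_coe_sort]
    simp [m, p]
  have hmi : ∀ S : Set V, m (p (S.indicator 1)) = ∑ v ∈ V' with v ∈ S, d v := by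
    intro S
    rw [hm, Finset.sum_filter]
    refine Finset.sum_congr rfl fun v _ => ?_
    simp [Set.indicator_apply]
  have hle : ∀ x ∈ stabPolytope G, l x ≤ c + m (p x) := by
    intro x hx
    have hc : Convex ℝ {x : V → ℝ | l x ≤ c + m (p x)} := by
      intro x hx y hy s t hs ht hst
      have e : p (s • x + t • y) = s • p x + t • p y := rfl
      simp only [mem_ofPred_eq, e, map_add, map_smul, smul_eq_mul] at *
      have : c = s * c + t * c := by rw [← add_mul, hst, one_mul]
      nlinarith
    refine convexHull_min ?_ hc hx
    rintro _ ⟨S, hS, rfl⟩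
    obtain ⟨A, -, -, -, h⟩ := hcd (V'.filter (· ∈ S)) (Finset.filter_subset _ _)
      (fun a ha b hb => hS a (Finset.mem_filter.1 ha).2 b (Finset.mem_filter.1 hb).2)
    rw [mem_ofPred_eq, hmi]
    exact h S hS (fun v hv => by simp [hv])
  have hlift : ∀ x ∈ stabPolytope G, ∃ x' ∈ stabPolytope G, p x' = p x ∧ l x' = c + m (p x) := by
    intro x hx
    have hc : Convex ℝ {x : V → ℝ | ∃ x' ∈ stabPolytope G, p x' = p x ∧ l x' = c + m (p x)} := by
      rintro x ⟨x', hx, ex, lx⟩ y ⟨y', hy, ey, ly⟩ s t hs ht hst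
      refine ⟨s • x' + t • y', convex_convexHull ℝ _ hx hy hs ht hst, ?_, ?_⟩
      · change s • p x' + t • p y' = s • p x + t • p y
        rw [ex, ey]
      · have e : p (s • x + t • y) = s • p x + t • p y := rfl
        simp only [e, map_add, map_smul, smul_eq_mul, lx, ly]
        have : c = s * c + t * c := by rw [← add_mul, hst, one_mul]
        linarith
    refine convexHull_min ?_ hc hx
    rintro _ ⟨S, hS, rfl⟩
    obtain ⟨A, hA, hAV, h, -⟩ := hcd (V'.filter (· ∈ S)) (Finset.filter_subset _ _)
      (fun a ha b hb => hS a (Finset.mem_filter.1 ha).2 b (Finset.mem_filter.1 hb).2)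
    refine ⟨A.indicator 1, stab_mem G A hA, ?_, ?_⟩
    · funext v
      have := hAV v v.2
      simp [v.2] at this
      simp [p, Set.indicator_apply, this]
    · rw [hmi]
      exact h
  refine ⟨m, ?_⟩
  change p '' _ = {y ∈ p '' stabPolytope G | ∀ z ∈ p '' stabPolytope G, m z ≤ m y}
  ext y
  constructor
  · rintro ⟨x, ⟨hx, hmax⟩, rfl⟩
    refine ⟨⟨x, hx, rfl⟩, ?_⟩
    rintro _ ⟨z, hz, rfl⟩
    obtain ⟨z', hz', -, e⟩ := hlift z hz
    have h1 := hmax z' hz'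
    have h2 := hle x hx
    linarith
  · rintro ⟨⟨x, hx, rfl⟩, hmax⟩
    obtain ⟨x', hx', e, e'⟩ := hlift x hx
    refine ⟨x', ⟨hx', fun z hz => ?_⟩, e⟩
    have h1 := hle z hz
    have h2 := hmax _ ⟨z, hz, rfl⟩
    linarith

/-- For a finite simple graph `G = (V, E)` and `V' ⊆ V`, the pair `(STAB(G), p_{V'})` has the
PF-property if and only if any two (distinct) vertices of `V'` that are joined in `G` by a path
all of whose inner vertices lie in `V ∖ V'` are adjacent in `G`. -/
theorem stab_pf_property_iff_paths {V : Type*} [Fintype V] [DecidableEq V]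
    (G : SimpleGraph V) (V' : Finset V) :
    (∀ F : Set (V → ℝ), IsExposed ℝ (stabPolytope G) F →
        IsExposed ℝ ((fun z (u : {v // v ∈ V'}) => z ↑u) '' stabPolytope G)
          ((fun z (u : {v // v ∈ V'}) => z ↑u) '' F)) ↔
      (∀ u ∈ V', ∀ w ∈ V', u ≠ w →
        (∃ p : G.Walk u w, p.IsPath ∧
          ∀ v ∈ p.support, v ≠ u → v ≠ w → v ∉ V') →
        G.Adj u w) :=
  ⟨fun h u hu w hw huw hp => pf_forward G V' h u hu w hw huw hp,
    fun H F hF => pf_backward G V' H F hF⟩
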